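/- arXiv:math/0302317 — 4 statements merged into one kernel-verified Lean document; each statement's English description precedes it below -/
import Mathlib

section
/- For every quadruple (V₁, V₁′, a, b) in Σ there exist an integer k with 1 ≤ k ≤ d and an admissible flag of level k for (V₁, V₁′, a, b); in other words, the images π_k(Σ̃_k) for k = 1, …, d cover all of Σ. -/
/-- §10.2: an admissible flag of level `k` for a quadruple `(V₁, V₁', a, b)`:
a chain `⊥ = W 0 ⊂ W 1 = V₁ ⊂ ⋯ ⊂ W k` with `dim (W j) = j`, such that
`V₁' ⊓ W (k-1) = ⊥`, `V₁' ≤ W k`, and for `1 ≤ j ≤ k` the image of the subspace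
`W j / V₁` of `V/V₁` under `b` equals `(W (j-1) + V₁')/V₁'`. -/
def IsAdmissibleFlag102 (𝕜 : Type*) [Field 𝕜] (V : Type*) [AddCommGroup V] [Module 𝕜 V]
    (V₁ V₁' : Submodule 𝕜 V) (b : (V ⧸ V₁) ≃ₗ[𝕜] (V ⧸ V₁'))
    (k : ℕ) (W : ℕ → Submodule 𝕜 V) : Prop :=
  W 0 = ⊥ ∧ W 1 = V₁ ∧
  (∀ j ≤ k, Module.finrank 𝕜 (W j) = j) ∧
  (∀ j < k, W j ≤ W (j + 1)) ∧
  V₁' ⊓ W (k - 1) = ⊥ ∧ V₁' ≤ W k ∧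
  (∀ j, 1 ≤ j → j ≤ k →
    ((W j).map V₁.mkQ).map b.toLinearMap = ((W (j - 1)) ⊔ V₁').map V₁'.mkQ)

theorem aux_rank102 {𝕜 V W : Type*} [Field 𝕜] [AddCommGroup V] [Module 𝕜 V] [FiniteDimensional 𝕜 V]
    [AddCommGroup W] [Module 𝕜 W] (f : V →ₗ[𝕜] W) (U : Submodule 𝕜 V) :
    Module.finrank 𝕜 (U.map f) + Module.finrank 𝕜 (U ⊓ LinearMap.ker f : Submodule 𝕜 V) =
      Module.finrank 𝕜 U := by
  have h := LinearMap.finrank_range_add_finrank_ker (f.domRestrict U)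
  rw [LinearMap.range_domRestrict] at h
  rw [← h, LinearMap.ker_domRestrict, inf_comm]
  congr 1
  have e := (Submodule.equivMapOfInjective U.subtype U.injective_subtype
    ((LinearMap.ker f).submoduleOf U)).finrank_eq
  rw [Submodule.submoduleOf, Submodule.map_comap_subtype, inf_comm] at e
  exact e.symm

theorem covering_10_2 (𝕜 : Type*) [Field 𝕜] [IsAlgClosed 𝕜]
    (V : Type*) [AddCommGroup V] [Module 𝕜 V] [FiniteDimensional 𝕜 V]
    (d : ℕ) (hd : 2 ≤ d) (hdim : Module.finrank 𝕜 V = d)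
    (V₁ V₁' : Submodule 𝕜 V)
    (hV₁ : Module.finrank 𝕜 V₁ = 1) (hV₁' : Module.finrank 𝕜 V₁' = 1)
    (a : V₁ ≃ₗ[𝕜] V₁') (b : (V ⧸ V₁) ≃ₗ[𝕜] (V ⧸ V₁')) :
    ∃ k, 1 ≤ k ∧ k ≤ d ∧ ∃ W : ℕ → Submodule 𝕜 V,
      IsAdmissibleFlag102 𝕜 V V₁ V₁' b k W := by
  classical
  let F : Submodule 𝕜 V → Submodule 𝕜 V := fun U =>
    ((U.map V₁'.mkQ).comap b.toLinearMap).comap V₁.mkQ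
  have hmono : Monotone F := fun U U' h =>
    Submodule.comap_mono (Submodule.comap_mono (Submodule.map_mono h))
  have hbot : F ⊥ = V₁ := by
    simp only [F, Submodule.map_bot, Submodule.comap_bot, LinearEquiv.ker, Submodule.ker_mkQ]
  have himg : ∀ U, ((F U).map V₁.mkQ).map b.toLinearMap = U.map V₁'.mkQ := by
    intro U
    simp only [F]
    rw [Submodule.map_comap_eq_of_surjective V₁.mkQ_surjective,
      Submodule.map_comap_eq_of_surjective b.surjective]
  have hle : ∀ U, V₁ ≤ F U := fun U => hbot ▸ hmono bot_le
  have hinf : ∀ U : Submodule 𝕜 V, ¬ V₁' ≤ U → V₁' ⊓ U = ⊥ := by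
    intro U hU
    have h1 : V₁' ⊓ U < V₁' := lt_of_le_of_ne inf_le_left (fun h => hU (inf_eq_left.mp h))
    have h2 := Submodule.finrank_lt_finrank_of_lt h1
    exact Submodule.finrank_eq_zero.mp (by omega)
  have hrank : ∀ U : Submodule 𝕜 V, ¬ V₁' ≤ U →
      Module.finrank 𝕜 (F U) = Module.finrank 𝕜 U + 1 := by
    intro U hU
    have h1 := aux_rank102 V₁'.mkQ U
    have h2 := aux_rank102 V₁.mkQ (F U)
    rw [Submodule.ker_mkQ, inf_comm, hinf U hU, finrank_bot] at h1
    rw [Submodule.ker_mkQ, inf_eq_right.mpr (hle U), hV₁] at h2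
    have h3 := (b.submoduleMap ((F U).map V₁.mkQ)).finrank_eq
    have h4 : Submodule.map (b : (V ⧸ V₁) →ₗ[𝕜] (V ⧸ V₁')) ((F U).map V₁.mkQ)
      = U.map V₁'.mkQ := himg U
    rw [h4] at h3
    omega
  let W : ℕ → Submodule 𝕜 V := fun n => F^[n] ⊥
  have hW0 : W 0 = ⊥ := rfl
  have hWs : ∀ n, W (n + 1) = F (W n) := fun n => Function.iterate_succ_apply' F n ⊥
  have hdimW : ∀ n, (∀ j < n, ¬ V₁' ≤ W j) → Module.finrank 𝕜 (W n) = n := by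
    intro n
    induction n with
    | zero => intro _; rw [hW0, finrank_bot]
    | succ n ih =>
      intro h
      rw [hWs, hrank _ (h n (by omega)), ih (fun j hj => h j (by omega))]
  have hex : ∃ k, k ≤ d ∧ V₁' ≤ W k := by
    by_contra hc
    push Not at hc
    have h := hdimW (d + 1) (fun j hj => hc j (by omega))
    have := Submodule.finrank_le (W (d + 1))
    omega
  have hex' : ∃ k, V₁' ≤ W k := hex.imp fun _ h => h.2
  have hk1 : 1 ≤ Nat.find hex' := by
    rw [Nat.one_le_iff_ne_zero]
    intro h0
    have h := Nat.find_spec hex'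
    rw [h0, hW0, le_bot_iff] at h
    rw [h, finrank_bot] at hV₁'
    omega
  obtain ⟨m, hm, hm'⟩ := hex
  have hmin : ∀ j < Nat.find hex', ¬ V₁' ≤ W j := fun j hj => Nat.find_min hex' hj
  refine ⟨Nat.find hex', hk1, (Nat.find_min' hex' hm').trans hm, W, hW0, ?_, ?_, ?_, ?_,
    Nat.find_spec hex', ?_⟩
  · rw [hWs 0, hW0, hbot]
  · exact fun j hj => hdimW j (fun i hi => hmin i (by omega))
  · intro j _
    induction j with
    | zero => rw [hW0]; exact bot_le
    | succ n ih => rw [hWs (n + 1), hWs n]; have := ih (by omega); rw [hWs n] at this; exact hmono this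
  · exact hinf _ (hmin _ (by omega))
  · intro j hj _
    obtain ⟨n, rfl⟩ : ∃ n, j = n + 1 := ⟨j - 1, by omega⟩
    rw [hWs, himg, Nat.add_sub_cancel, Submodule.map_sup, Submodule.mkQ_map_self, sup_bot_eq]
end

section
/- If a quadruple (V₁, V₁′, a, b) in Σ admits an admissible flag 0 = V₀ ⊂ V₁ ⊂ ⋯ ⊂ V_k of level k and an admissible flag 0 = W₀ ⊂ W₁ ⊂ ⋯ ⊂ W_{k′} of level k′, then k = k′ and V_j = W_j for all j; in other words, each map π_k is injective and the images π_k(Σ̃_k), k = 1, …, d, are pairwise disjoint, so that together with the covering statement they form a partition of Σ into d pieces. -/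
theorem flag102_mono {𝕜 : Type*} [Field 𝕜] {V : Type*} [AddCommGroup V] [Module 𝕜 V]
    {k : ℕ} {W : ℕ → Submodule 𝕜 V} (h : ∀ j < k, W j ≤ W (j + 1)) (i j : ℕ) (hij : i ≤ j)
    (hj : j ≤ k) : W i ≤ W j := by
  induction j, hij using Nat.le_induction with
  | base => exact le_rfl
  | succ n hn ih => exact (ih (by omega)).trans (h n (by omega))

theorem flag102_agree {𝕜 : Type*} [Field 𝕜] {V : Type*} [AddCommGroup V] [Module 𝕜 V]
    {V₁ V₁' : Submodule 𝕜 V} {b : (V ⧸ V₁) ≃ₗ[𝕜] (V ⧸ V₁')}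
    {k k' : ℕ} {W W' : ℕ → Submodule 𝕜 V}
    (hW : IsAdmissibleFlag102 𝕜 V V₁ V₁' b k W)
    (hW' : IsAdmissibleFlag102 𝕜 V V₁ V₁' b k' W') (j : ℕ) (hj : j ≤ k) (hj' : j ≤ k') :
    W j = W' j := by
  obtain ⟨h0, h1, -, hm, -, -, hb⟩ := hW
  obtain ⟨h0', h1', -, hm', -, -, hb'⟩ := hW'
  induction j with
  | zero => rw [h0, h0']
  | succ n ih =>
    have e := hb (n + 1) (by omega) hj
    have e' := hb' (n + 1) (by omega) hj'
    simp only [Nat.add_sub_cancel] at e e'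
    rw [ih (by omega) (by omega), ← e'] at e
    have e2 := Submodule.map_injective_of_injective (f := b.toLinearMap) b.injective e
    have e3 := congrArg (Submodule.comap V₁.mkQ) e2
    have l : V₁ ≤ W (n + 1) := h1 ▸ flag102_mono hm 1 (n + 1) (by omega) hj
    have l' : V₁ ≤ W' (n + 1) := h1' ▸ flag102_mono hm' 1 (n + 1) (by omega) hj'
    rwa [Submodule.comap_map_mkQ, Submodule.comap_map_mkQ, sup_eq_right.2 l,
      sup_eq_right.2 l'] at e3

theorem flag102_le {𝕜 : Type*} [Field 𝕜] {V : Type*} [AddCommGroup V] [Module 𝕜 V]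
    {V₁ V₁' : Submodule 𝕜 V} (hV₁' : Module.finrank 𝕜 V₁' = 1)
    {b : (V ⧸ V₁) ≃ₗ[𝕜] (V ⧸ V₁')}
    {k k' : ℕ} {W W' : ℕ → Submodule 𝕜 V}
    (hW : IsAdmissibleFlag102 𝕜 V V₁ V₁' b k W)
    (hW' : IsAdmissibleFlag102 𝕜 V V₁ V₁' b k' W') : k' ≤ k := by
  by_contra! hlt
  have e := flag102_agree hW hW' k le_rfl hlt.le
  obtain ⟨-, -, -, -, -, hle, -⟩ := hW
  obtain ⟨-, -, -, hm', hbot, -, -⟩ := hW'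
  have l : V₁' ≤ W' (k' - 1) :=
    (hle.trans e.le).trans (flag102_mono hm' k (k' - 1) (by omega) (by omega))
  rw [inf_eq_left.2 l] at hbot
  subst hbot
  simp at hV₁'

/-- Uniqueness: if `(V₁, V₁', a, b)` admits an admissible flag of level `k` and one of
level `k'`, then `k = k'` and the two flags agree; i.e. each `π_k` is injective and the
images `π_k(Σ̃_k)` are pairwise disjoint. -/
theorem uniqueness_10_2 (𝕜 : Type*) [Field 𝕜] [IsAlgClosed 𝕜]
    (V : Type*) [AddCommGroup V] [Module 𝕜 V] [FiniteDimensional 𝕜 V]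
    (d : ℕ) (hd : 2 ≤ d) (hdim : Module.finrank 𝕜 V = d)
    (V₁ V₁' : Submodule 𝕜 V)
    (hV₁ : Module.finrank 𝕜 V₁ = 1) (hV₁' : Module.finrank 𝕜 V₁' = 1)
    (a : V₁ ≃ₗ[𝕜] V₁') (b : (V ⧸ V₁) ≃ₗ[𝕜] (V ⧸ V₁'))
    (k k' : ℕ) (hk : 1 ≤ k) (hkd : k ≤ d) (hk' : 1 ≤ k') (hk'd : k' ≤ d)
    (W W' : ℕ → Submodule 𝕜 V)
    (hW : IsAdmissibleFlag102 𝕜 V V₁ V₁' b k W)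
    (hW' : IsAdmissibleFlag102 𝕜 V V₁ V₁' b k' W') :
    k = k' ∧ ∀ j ≤ k, W j = W' j := by
  have e : k = k' := le_antisymm (flag102_le hV₁' hW' hW) (flag102_le hV₁' hW hW')
  exact ⟨e, fun j hj => flag102_agree hW hW' j hj (e ▸ hj)⟩
end

section
/- For every quadruple (V₁, H, a, b) in Σ there exist an integer k with 1 ≤ k ≤ d and an admissible flag of level k for (V₁, H, a, b); in other words, the images π_k(Σ̃_k) for k = 1, …, d cover all of Σ. -/
/-- §10.3: an admissible flag of level `k` for a quadruple `(V₁, H, a, b)`: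
a chain `⊥ = W 0 ⊂ W 1 = V₁ ⊂ ⋯ ⊂ W k` with `dim (W j) = j`, such that
`W (k-1) = W k ⊓ H` and for `1 ≤ j ≤ k` the image of the subspace `W j / V₁` of
`V/V₁` under `b` equals `W (j-1)`, regarded as a subspace of `H`. -/
def IsAdmissibleFlag103 (𝕜 : Type*) [Field 𝕜] (V : Type*) [AddCommGroup V] [Module 𝕜 V]
    (V₁ H : Submodule 𝕜 V) (b : (V ⧸ V₁) ≃ₗ[𝕜] H)
    (k : ℕ) (W : ℕ → Submodule 𝕜 V) : Prop :=
  W 0 = ⊥ ∧ W 1 = V₁ ∧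
  (∀ j ≤ k, Module.finrank 𝕜 (W j) = j) ∧
  (∀ j < k, W j ≤ W (j + 1)) ∧
  W (k - 1) = W k ⊓ H ∧
  (∀ j, 1 ≤ j → j ≤ k →
    (((W j).map V₁.mkQ).map b.toLinearMap).map H.subtype = W (j - 1))

theorem aux_step103 {𝕜 : Type*} [Field 𝕜] {V : Type*} [AddCommGroup V] [Module 𝕜 V]
    [FiniteDimensional 𝕜 V] (f : V →ₗ[𝕜] V) (hk : Module.finrank 𝕜 (LinearMap.ker f) = 1)
    (j : ℕ) (h : LinearMap.ker (f ^ j) ≤ LinearMap.range f) :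
    (LinearMap.ker (f ^ (j + 1))).map f = LinearMap.ker (f ^ j) ∧
    Module.finrank 𝕜 (LinearMap.ker (f ^ (j + 1))) =
      Module.finrank 𝕜 (LinearMap.ker (f ^ j)) + 1 := by
  have h1 : LinearMap.ker (f ^ (j + 1)) = (LinearMap.ker (f ^ j)).comap f := by
    ext x
    simp [pow_succ]
  have h2 : (LinearMap.ker (f ^ (j + 1))).map f = LinearMap.ker (f ^ j) := by
    rw [h1, Submodule.map_comap_eq, inf_eq_right]
    exact h
  refine ⟨h2, ?_⟩
  have hle : LinearMap.ker f ≤ LinearMap.ker (f ^ (j + 1)) := by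
    intro x hx
    have hx' : f x = 0 := hx
    simp [pow_succ, hx']
  have h3 := LinearMap.finrank_range_add_finrank_ker (f.domRestrict (LinearMap.ker (f ^ (j + 1))))
  rw [LinearMap.range_domRestrict, h2, LinearMap.ker_domRestrict] at h3
  rw [← h3]
  congr 1
  exact (Submodule.comapSubtypeEquivOfLe hle).finrank_eq.trans hk

/-- Covering: every quadruple `(V₁, H, a, b)` in `Σ` admits an admissible flag of
some level `k`, `1 ≤ k ≤ d`; i.e. the images `π_k(Σ̃_k)`, `k = 1, …, d`, cover `Σ`. -/
theorem covering_10_3 (𝕜 : Type*) [Field 𝕜] [IsAlgClosed 𝕜]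
    (V : Type*) [AddCommGroup V] [Module 𝕜 V] [FiniteDimensional 𝕜 V]
    (d : ℕ) (hd : 2 ≤ d) (hdim : Module.finrank 𝕜 V = d)
    (V₁ H : Submodule 𝕜 V)
    (hV₁ : Module.finrank 𝕜 V₁ = 1) (hH : Module.finrank 𝕜 H = d - 1)
    (a : V₁ ≃ₗ[𝕜] (V ⧸ H)) (b : (V ⧸ V₁) ≃ₗ[𝕜] H) :
    ∃ k, 1 ≤ k ∧ k ≤ d ∧ ∃ W : ℕ → Submodule 𝕜 V,
      IsAdmissibleFlag103 𝕜 V V₁ H b k W := by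
  classical
  set f : V →ₗ[𝕜] V := H.subtype ∘ₗ b.toLinearMap ∘ₗ V₁.mkQ with hf
  have hker : LinearMap.ker f = V₁ := by
    ext x
    simp [hf]
  have hrange : LinearMap.range f = H := by
    rw [hf, LinearMap.range_comp, LinearMap.range_comp, Submodule.range_mkQ, Submodule.map_top,
      LinearEquiv.range, Submodule.map_top, Submodule.range_subtype]
  have hk1 : Module.finrank 𝕜 (LinearMap.ker f) = 1 := by rw [hker, hV₁]
  have hmap : ∀ W : Submodule 𝕜 V,
      ((W.map V₁.mkQ).map b.toLinearMap).map H.subtype = W.map f := by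
    intro W
    rw [hf, Submodule.map_comp, Submodule.map_comp]
  have h0 : LinearMap.ker (f ^ 0) = ⊥ := by
    ext x
    simp
  have hdimk : ∀ n, (∀ j < n, LinearMap.ker (f ^ j) ≤ H) →
      Module.finrank 𝕜 (LinearMap.ker (f ^ n)) = n := by
    intro n
    induction n with
    | zero => intro _; rw [h0]; simp
    | succ n ih =>
      intro h
      rw [(aux_step103 f hk1 n (hrange ▸ h n (by omega))).2, ih (fun j hj => h j (by omega))]
  have hex : ∃ n, ¬ LinearMap.ker (f ^ n) ≤ H := by
    by_contra! hc
    have e1 := hdimk (d + 1) (fun j _ => hc j)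
    have e2 := Submodule.finrank_le (LinearMap.ker (f ^ (d + 1)))
    omega
  obtain ⟨k, hk, hmin⟩ : ∃ k, ¬ LinearMap.ker (f ^ k) ≤ H ∧
      ∀ j < k, LinearMap.ker (f ^ j) ≤ H :=
    ⟨Nat.find hex, Nat.find_spec hex, fun j hj => not_not.1 (Nat.find_min hex hj)⟩
  have hkpos : 1 ≤ k := by
    rcases Nat.eq_zero_or_pos k with h | h
    · subst h
      rw [h0] at hk
      exact absurd bot_le hk
    · exact h
  have hmono : ∀ j, LinearMap.ker (f ^ j) ≤ LinearMap.ker (f ^ (j + 1)) := by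
    intro j x hx
    have hx' : (f ^ j) x = 0 := hx
    simp [pow_succ', hx']
  have hdimj : ∀ j ≤ k, Module.finrank 𝕜 (LinearMap.ker (f ^ j)) = j :=
    fun j hj => hdimk j (fun i hi => hmin i (by omega))
  refine ⟨k, hkpos, ?_, fun j => LinearMap.ker (f ^ j), h0, ?_, hdimj, fun j _ => hmono j, ?_, ?_⟩
  · have e2 := Submodule.finrank_le (LinearMap.ker (f ^ k))
    have e1 := hdimj k le_rfl
    omega
  · simp only [pow_one]
    exact hker
  · obtain ⟨m, rfl⟩ : ∃ m, k = m + 1 := ⟨k - 1, by omega⟩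
    simp only [Nat.add_sub_cancel]
    apply Submodule.eq_of_le_of_finrank_le (le_inf (hmono m) (hmin m (by omega)))
    have hlt : LinearMap.ker (f ^ (m + 1)) ⊓ H < LinearMap.ker (f ^ (m + 1)) :=
      inf_lt_left.2 hk
    have e1 := Submodule.finrank_lt_finrank_of_lt hlt
    have e2 := hdimj (m + 1) le_rfl
    have e3 := hdimj m (by omega)
    omega
  · intro j hj hjk
    obtain ⟨m, rfl⟩ : ∃ m, j = m + 1 := ⟨j - 1, by omega⟩
    rw [hmap]
    exact (aux_step103 f hk1 m (hrange ▸ hmin m (by omega))).1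
end

section
/- If a quadruple (V₁, H, a, b) in Σ admits an admissible flag 0 = V₀ ⊂ V₁ ⊂ ⋯ ⊂ V_k of level k and an admissible flag 0 = W₀ ⊂ W₁ ⊂ ⋯ ⊂ W_{k′} of level k′, then k = k′ and V_j = W_j for all j; in other words, each map π_k is injective and the images π_k(Σ̃_k), k = 1, …, d, are pairwise disjoint, so that together with the covering statement they form a partition of Σ into d pieces. -/
theorem flag_ge_aux {𝕜 : Type*} [Field 𝕜] {V : Type*} [AddCommGroup V] [Module 𝕜 V]
    {V₁ H : Submodule 𝕜 V} {b : (V ⧸ V₁) ≃ₗ[𝕜] H} {k : ℕ} {W : ℕ → Submodule 𝕜 V}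
    (hW : IsAdmissibleFlag103 𝕜 V V₁ H b k W) (j : ℕ) (hj : j + 1 ≤ k) : V₁ ≤ W (j + 1) := by
  obtain ⟨h0, h1, hd, hm, hH, hb⟩ := hW
  induction j with
  | zero => exact h1.ge
  | succ n ih => exact (ih (by omega)).trans (hm (n + 1) (by omega))

theorem flag_comap_aux {𝕜 : Type*} [Field 𝕜] {V : Type*} [AddCommGroup V] [Module 𝕜 V]
    {V₁ H : Submodule 𝕜 V} {b : (V ⧸ V₁) ≃ₗ[𝕜] H} {k : ℕ} {W : ℕ → Submodule 𝕜 V}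
    (hW : IsAdmissibleFlag103 𝕜 V V₁ H b k W) (j : ℕ) (hj : j + 1 ≤ k) :
    W (j + 1) = (W j).comap (H.subtype ∘ₗ b.toLinearMap ∘ₗ V₁.mkQ) := by
  have hge := flag_ge_aux hW j hj
  obtain ⟨h0, h1, hd, hm, hH, hb⟩ := hW
  have h := hb (j + 1) (by omega) hj
  rw [← Submodule.map_comp, ← Submodule.map_comp] at h
  simp only [Nat.add_sub_cancel] at h
  have hker : LinearMap.ker (H.subtype ∘ₗ b.toLinearMap ∘ₗ V₁.mkQ) = V₁ := by
    ext x
    simp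
  rw [← h, LinearMap.comp_assoc, Submodule.comap_map_eq, hker, sup_eq_left.mpr hge]

theorem flag_agree_aux {𝕜 : Type*} [Field 𝕜] {V : Type*} [AddCommGroup V] [Module 𝕜 V]
    {V₁ H : Submodule 𝕜 V} {b : (V ⧸ V₁) ≃ₗ[𝕜] H} {k k' : ℕ} {W W' : ℕ → Submodule 𝕜 V}
    (hW : IsAdmissibleFlag103 𝕜 V V₁ H b k W) (hW' : IsAdmissibleFlag103 𝕜 V V₁ H b k' W')
    (j : ℕ) (hj : j ≤ k) (hj' : j ≤ k') : W j = W' j := by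
  induction j with
  | zero => rw [hW.1, hW'.1]
  | succ n ih =>
    rw [flag_comap_aux hW n hj, flag_comap_aux hW' n hj', ih (by omega) (by omega)]

theorem flag_level_aux {𝕜 : Type*} [Field 𝕜] {V : Type*} [AddCommGroup V] [Module 𝕜 V]
    {V₁ H : Submodule 𝕜 V} {b : (V ⧸ V₁) ≃ₗ[𝕜] H} {k k' : ℕ} {W W' : ℕ → Submodule 𝕜 V}
    (hW : IsAdmissibleFlag103 𝕜 V V₁ H b k W) (hW' : IsAdmissibleFlag103 𝕜 V V₁ H b k' W')
    (hk : 1 ≤ k) : k' ≤ k := by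
  by_contra hlt
  have hag := flag_agree_aux hW hW' k le_rfl (by omega)
  obtain ⟨-, -, hd, -, hH, -⟩ := hW
  obtain ⟨-, -, -, -, -, hb⟩ := hW'
  have h := hb (k + 1) (by omega) (by omega)
  simp only [Nat.add_sub_cancel] at h
  have hle : W k ≤ H := by
    rw [hag, ← h]
    exact Submodule.map_subtype_le _ _
  rw [inf_eq_left.mpr hle] at hH
  have e1 := hd k le_rfl
  have e2 := hd (k - 1) (by omega)
  rw [hH, e1] at e2
  omega

/-- Uniqueness: if `(V₁, H, a, b)` admits an admissible flag of level `k` and one of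
level `k'`, then `k = k'` and the two flags agree; i.e. each `π_k` is injective and the
images `π_k(Σ̃_k)` are pairwise disjoint. -/
theorem uniqueness_10_3 (𝕜 : Type*) [Field 𝕜] [IsAlgClosed 𝕜]
    (V : Type*) [AddCommGroup V] [Module 𝕜 V] [FiniteDimensional 𝕜 V]
    (d : ℕ) (hd : 2 ≤ d) (hdim : Module.finrank 𝕜 V = d)
    (V₁ H : Submodule 𝕜 V)
    (hV₁ : Module.finrank 𝕜 V₁ = 1) (hH : Module.finrank 𝕜 H = d - 1)
    (a : V₁ ≃ₗ[𝕜] (V ⧸ H)) (b : (V ⧸ V₁) ≃ₗ[𝕜] H)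
    (k k' : ℕ) (hk : 1 ≤ k) (hkd : k ≤ d) (hk' : 1 ≤ k') (hk'd : k' ≤ d)
    (W W' : ℕ → Submodule 𝕜 V)
    (hW : IsAdmissibleFlag103 𝕜 V V₁ H b k W)
    (hW' : IsAdmissibleFlag103 𝕜 V V₁ H b k' W') :
    k = k' ∧ ∀ j ≤ k, W j = W' j := by
  have hkk : k = k' := le_antisymm (flag_level_aux hW' hW hk') (flag_level_aux hW hW' hk)
  exact ⟨hkk, fun j hj => flag_agree_aux hW hW' j hj (hkk ▸ hj)⟩
end
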